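/- Under the hypotheses of the bipartition theorem (G connected on n vertices, S_1 = {1,…,k}, S_2 = {k+1,…,n}, α ∈ (0,π/2), θ a solution of the frustrated Kuramoto model with θ_i − θ_j → 0 within each part and θ_i − θ_p not converging to 0 across the two parts), let λ_1(t) = (1/k) Σ_{i∈S_1} θ_i(t) and λ_2(t) = (1/(n−k)) Σ_{j∈S_2} θ_j(t). If λ_1(t) − λ_2(t) does NOT converge to any constant as t → ∞, then the partition S_1 ∪ S_2 is an equitable partition of G, i.e. δ_{p,1} = δ_{q,1} and δ_{p,2} = δ_{q,2} for all p, q ∈ S_1, and likewise for all pairs in S_2. -/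

import Mathlib

open scoped Classical

/-- The right-hand side of the frustrated Kuramoto model at vertex `i`, time `t`. -/
noncomputable def kuramotoDeriv {n : ℕ} (G : SimpleGraph (Fin n)) (α : ℝ)
    (θ : Fin n → ℝ → ℝ) (i : Fin n) (t : ℝ) : ℝ :=
  ∑ j : Fin n, if G.Adj i j then Real.sin (θ j t - θ i t - α) else 0

/-- `θ` is a solution of the frustrated Kuramoto model on `G` with frustration `α`. -/
def IsKuramotoSol {n : ℕ} (G : SimpleGraph (Fin n)) (α : ℝ)
    (θ : Fin n → ℝ → ℝ) : Prop :=
  ∀ i : Fin n, ∀ t ∈ Set.Ici (0 : ℝ),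
    HasDerivWithinAt (θ i) (kuramotoDeriv G α θ i t) (Set.Ici 0) t

/-- `δ_{i,1}`: the number of neighbours of `i` lying in `S₁ = {0, …, k-1}`. -/
noncomputable def deg1 {n : ℕ} (G : SimpleGraph (Fin n)) (k : ℕ) (i : Fin n) : ℕ :=
  (Finset.univ.filter fun j : Fin n => G.Adj i j ∧ (j : ℕ) < k).card

/-- `δ_{i,2}`: the number of neighbours of `i` lying in `S₂ = {k, …, n-1}`. -/
noncomputable def deg2 {n : ℕ} (G : SimpleGraph (Fin n)) (k : ℕ) (i : Fin n) : ℕ :=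
  (Finset.univ.filter fun j : Fin n => G.Adj i j ∧ k ≤ (j : ℕ)).card

/-- The average phase `λ₁(t)` of the vertices in `S₁ = {0, …, k-1}`. -/
noncomputable def avg1 {n : ℕ} (k : ℕ) (θ : Fin n → ℝ → ℝ) (t : ℝ) : ℝ :=
  (∑ i ∈ Finset.univ.filter fun i : Fin n => (i : ℕ) < k, θ i t) / (k : ℝ)

/-- The average phase `λ₂(t)` of the vertices in `S₂ = {k, …, n-1}`. -/
noncomputable def avg2 {n : ℕ} (k : ℕ) (θ : Fin n → ℝ → ℝ) (t : ℝ) : ℝ :=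
  (∑ j ∈ Finset.univ.filter fun j : Fin n => k ≤ (j : ℕ), θ j t) / ((n - k : ℕ) : ℝ)

open Filter Topology

lemma kb_sin_conv (y : ℝ → ℝ) (hy : ContinuousOn y (Set.Ici 0)) (c : ℝ)
    (h : Tendsto (fun t => Real.sin (y t)) atTop (𝓝 c)) :
    ∃ l, Tendsto y atTop (𝓝 l) := by
  -- intermediate values
  have ivt : ∀ t₁ t₂ v : ℝ, 0 ≤ t₁ → t₁ ≤ t₂ →
      (y t₁ ≤ v ∧ v ≤ y t₂ ∨ y t₂ ≤ v ∧ v ≤ y t₁) → ∃ t, t₁ ≤ t ∧ y t = v := by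
    intro t₁ t₂ v h0 h12 hv
    have hc : ContinuousOn y (Set.Icc t₁ t₂) := hy.mono (fun z hz => h0.trans hz.1)
    rcases hv with hv | hv
    · obtain ⟨t, ht, e⟩ := intermediate_value_Icc h12 hc hv
      exact ⟨t, ht.1, e⟩
    · obtain ⟨t, ht, e⟩ := intermediate_value_Icc' h12 hc hv
      exact ⟨t, ht.1, e⟩
  obtain ⟨s, hs⟩ : ∃ s : ℝ, 1 ≤ |Real.sin s - c| := by
    rcases le_total c 0 with hc | hc
    · refine ⟨Real.pi / 2, ?_⟩
      rw [Real.sin_pi_div_two]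
      exact le_trans (by linarith) (le_abs_self _)
    · refine ⟨-(Real.pi / 2), ?_⟩
      rw [Real.sin_neg, Real.sin_pi_div_two]
      exact le_trans (by linarith) (neg_le_abs _)
  have hev : ∀ᶠ t in atTop, |Real.sin (y t) - c| < 1 := by
    have := (Metric.tendsto_nhds.1 h) 1 one_pos
    simpa [Real.dist_eq] using this
  obtain ⟨T₀, hT₀⟩ := eventually_atTop.1 hev
  set T := max T₀ 0 with hT
  have hT0 : 0 ≤ T := le_max_right _ _
  have hTT : T₀ ≤ T := le_max_left _ _
  have avoid : ∀ t, T ≤ t → ∀ m : ℤ, y t ≠ s + m * (2 * Real.pi) := by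
    intro t ht m e
    have := hT₀ t (hTT.trans ht)
    rw [e, Real.sin_add_int_mul_two_pi] at this
    linarith
  have hpi := Real.pi_pos
  have hbu : ∃ M, ∀ t, T ≤ t → y t ≤ M := by
    obtain ⟨N, hN⟩ := exists_int_gt ((y T - s) / (2 * Real.pi))
    rw [div_lt_iff₀ (by positivity)] at hN
    refine ⟨s + N * (2 * Real.pi), fun t ht => ?_⟩
    by_contra hlt
    obtain ⟨t', h', e⟩ := ivt T t _ hT0 ht (Or.inl ⟨by linarith, (not_le.1 hlt).le⟩)
    exact avoid t' h' N e
  have hbl : ∃ M, ∀ t, T ≤ t → M ≤ y t := by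
    obtain ⟨N, hN⟩ := exists_int_lt ((y T - s) / (2 * Real.pi))
    rw [lt_div_iff₀ (by positivity)] at hN
    refine ⟨s + N * (2 * Real.pi), fun t ht => ?_⟩
    by_contra hlt
    obtain ⟨t', h', e⟩ := ivt T t _ hT0 ht (Or.inr ⟨(not_le.1 hlt).le, by linarith⟩)
    exact avoid t' h' N e
  obtain ⟨M, hM⟩ := hbu
  obtain ⟨M', hM'⟩ := hbl
  refine tendsto_of_no_upcrossings (s := Set.univ) dense_univ ?_
    ⟨M, eventually_map.2 (eventually_atTop.2 ⟨T, hM⟩)⟩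
    ⟨M', eventually_map.2 (eventually_atTop.2 ⟨T, hM'⟩)⟩
  rintro a - b - hab ⟨ha, hb⟩
  have key : ∀ v, a ≤ v → v ≤ b → Real.sin v = c := by
    intro v hav hvb
    by_contra hne
    have hpos : 0 < |Real.sin v - c| := abs_pos.2 (sub_ne_zero.2 hne)
    have := (Metric.tendsto_nhds.1 h) _ hpos
    obtain ⟨T₁, hT₁⟩ := eventually_atTop.1 this
    obtain ⟨t₁, ht₁, h₁⟩ := (frequently_atTop.1 ha) (max T₁ 0)
    obtain ⟨t₂, ht₂, h₂⟩ := (frequently_atTop.1 hb) t₁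
    obtain ⟨t, ht, e⟩ := ivt t₁ t₂ v ((le_max_right _ _).trans ht₁) ht₂
      (Or.inl ⟨by linarith, by linarith⟩)
    have := hT₁ t (((le_max_left _ _).trans ht₁).trans ht)
    rw [e, Real.dist_eq] at this
    exact lt_irrefl _ this
  set h' := min ((b - a) / 2) 1 with hh
  have hh0 : 0 < h' := lt_min (by linarith) one_pos
  have hh1 : h' ≤ 1 := min_le_right _ _
  have hh2 : h' ≤ (b - a) / 2 := min_le_left _ _
  have k1 := key ((a + b) / 2) (by linarith) (by linarith)
  have k2 := key ((a + b) / 2 + h') (by linarith) (by linarith)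
  have k3 := key ((a + b) / 2 - h') (by linarith) (by linarith)
  rw [Real.sin_add] at k2
  rw [Real.sin_sub] at k3
  have hs' : 0 < Real.sin h' := Real.sin_pos_of_pos_of_lt_pi hh0 (by linarith [Real.pi_gt_three])
  have hsc := Real.sin_sq_add_cos_sq h'
  have hcos : Real.cos h' < 1 := by nlinarith [sq_nonneg (Real.cos h' - 1)]
  have e1 : Real.cos ((a + b) / 2) * Real.sin h' = 0 := by linarith
  have e2 : Real.sin ((a + b) / 2) * (1 - Real.cos h') = 0 := by linarith
  have e1' := (mul_eq_zero.1 e1).resolve_right hs'.ne'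
  have e2' := (mul_eq_zero.1 e2).resolve_right (by linarith)
  have := Real.sin_sq_add_cos_sq ((a + b) / 2)
  rw [e1', e2'] at this
  norm_num at this

lemma kb_barbalat (g D : ℝ → ℝ) (L : ℝ)
    (hg : ∀ t ∈ Set.Ici (0 : ℝ), HasDerivWithinAt g (D t) (Set.Ici 0) t)
    (hL : ∀ s ∈ Set.Ici (0 : ℝ), ∀ t ∈ Set.Ici (0 : ℝ), |D s - D t| ≤ L * |s - t|)
    (h : Tendsto g atTop (𝓝 0)) : Tendsto D atTop (𝓝 0) := by
  rw [Metric.tendsto_nhds]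
  intro ε hε
  set K := |L| + 1 with hK
  have hK0 : 0 < K := by positivity
  set h' := ε / (2 * K) with hh
  have hh0 : 0 < h' := by positivity
  have hKh : K * h' = ε / 2 := by rw [hh]; field_simp
  have ev := (Metric.tendsto_nhds.1 h) (h' * ε / 4) (by positivity)
  obtain ⟨T, hT⟩ := eventually_atTop.1 ev
  filter_upwards [eventually_ge_atTop T, eventually_ge_atTop 0] with t ht ht0
  have a1 := hT t ht
  have a2 := hT (t + h') (by linarith)
  rw [Real.dist_eq, sub_zero] at a1 a2 ⊢
  obtain ⟨c, hc, e⟩ := exists_hasDerivAt_eq_slope g D (show t < t + h' by linarith)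
    (fun z hz => ((hg z (ht0.trans hz.1)).continuousWithinAt).mono
      (fun w hw => ht0.trans hw.1))
    (fun z hz => (hg z (ht0.trans hz.1.le)).hasDerivAt
      (Ici_mem_nhds (lt_of_le_of_lt ht0 hz.1)))
  have hDc : |D c| < ε / 2 := by
    rw [e, add_sub_cancel_left, abs_div, abs_of_pos hh0, div_lt_iff₀ hh0]
    have := abs_sub (g (t + h')) (g t)
    nlinarith
  have hl := hL t ht0 c (ht0.trans hc.1.le)
  have h3 : |t - c| ≤ h' := by
    rw [abs_le]; constructor <;> linarith [hc.1, hc.2]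
  have h4 : L * |t - c| ≤ K * h' :=
    mul_le_mul (by linarith [le_abs_self L]) h3 (abs_nonneg _) hK0.le
  have h5 : |D t| ≤ |D t - D c| + |D c| := by
    have := abs_add_le (D t - D c) (D c)
    simpa using this
  linarith

lemma kb_sin_lip (x y : ℝ) : |Real.sin x - Real.sin y| ≤ |x - y| := by
  have := Real.lipschitzWith_sin.dist_le_mul x y
  simpa [Real.dist_eq] using this

lemma kb_deriv_bound {n : ℕ} (G : SimpleGraph (Fin n)) (α : ℝ) (θ : Fin n → ℝ → ℝ)
    (i : Fin n) (t : ℝ) : |kuramotoDeriv G α θ i t| ≤ n := by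
  unfold kuramotoDeriv
  refine (Finset.abs_sum_le_sum_abs _ _).trans ?_
  calc _ ≤ ∑ j : Fin n, (1 : ℝ) := by
        refine Finset.sum_le_sum fun j _ => ?_
        split_ifs
        · exact Real.abs_sin_le_one _
        · simp
    _ = n := by simp

lemma kb_lip {n : ℕ} (G : SimpleGraph (Fin n)) (α : ℝ) (θ : Fin n → ℝ → ℝ)
    (hθ : IsKuramotoSol G α θ) (i : Fin n) (s : ℝ) (hs : s ∈ Set.Ici (0 : ℝ)) (t : ℝ)
    (ht : t ∈ Set.Ici (0 : ℝ)) : |θ i s - θ i t| ≤ n * |s - t| := by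
  have := (convex_Ici (0 : ℝ)).norm_image_sub_le_of_norm_hasDerivWithin_le
    (f := θ i) (C := n) (fun x hx => hθ i x hx)
    (fun x _ => by simpa using kb_deriv_bound G α θ i x) ht hs
  simpa using this

lemma kb_deriv_lip {n : ℕ} (G : SimpleGraph (Fin n)) (α : ℝ) (θ : Fin n → ℝ → ℝ)
    (hθ : IsKuramotoSol G α θ) (i : Fin n) (s : ℝ) (hs : s ∈ Set.Ici (0 : ℝ)) (t : ℝ)
    (ht : t ∈ Set.Ici (0 : ℝ)) :
    |kuramotoDeriv G α θ i s - kuramotoDeriv G α θ i t| ≤ (n * (2 * n)) * |s - t| := by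
  unfold kuramotoDeriv
  rw [← Finset.sum_sub_distrib]
  refine (Finset.abs_sum_le_sum_abs _ _).trans ?_
  calc _ ≤ ∑ j : Fin n, (2 * n * |s - t| : ℝ) := by
        refine Finset.sum_le_sum fun j _ => ?_
        split_ifs
        · refine (kb_sin_lip _ _).trans ?_
          have e : θ j s - θ i s - α - (θ j t - θ i t - α)
            = (θ j s - θ j t) - (θ i s - θ i t) := by ring
          rw [e]
          have := abs_sub (θ j s - θ j t) (θ i s - θ i t)
          linarith [kb_lip G α θ hθ j s hs t ht, kb_lip G α θ hθ i s hs t ht]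
        · simp; positivity
    _ = _ := by simp; ring

lemma kb_core {n : ℕ} (G : SimpleGraph (Fin n)) (α : ℝ) (hα : α ∈ Set.Ioo 0 (Real.pi / 2))
    (θ : Fin n → ℝ → ℝ) (hθ : IsKuramotoSol G α θ) (P : Fin n → Prop)
    (h1 : ∀ i j : Fin n, P i → P j → Tendsto (fun t => θ i t - θ j t) atTop (𝓝 0))
    (h2 : ∀ i j : Fin n, ¬ P i → ¬ P j → Tendsto (fun t => θ i t - θ j t) atTop (𝓝 0))
    (a b : Fin n) (ha : P a) (hb : ¬ P b)
    (hdiv : ¬ ∃ c : ℝ, Tendsto (fun t => θ a t - θ b t) atTop (𝓝 c))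
    (u v : Fin n) (hu : P u) (hv : P v) :
    (Finset.univ.filter fun j : Fin n => G.Adj u j ∧ P j).card =
      (Finset.univ.filter fun j : Fin n => G.Adj v j ∧ P j).card ∧
    (Finset.univ.filter fun j : Fin n => G.Adj u j ∧ ¬ P j).card =
      (Finset.univ.filter fun j : Fin n => G.Adj v j ∧ ¬ P j).card := by
  have asym : ∀ p, P p → Tendsto (fun t => kuramotoDeriv G α θ p t +
      ((Finset.univ.filter fun j : Fin n => G.Adj p j ∧ P j).card * Real.sin α +
       (Finset.univ.filter fun j : Fin n => G.Adj p j ∧ ¬ P j).card *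
        Real.sin (θ a t - θ b t + α))) atTop (𝓝 0) := by
    intro p hp
    have e : ∀ t, kuramotoDeriv G α θ p t +
      ((Finset.univ.filter fun j : Fin n => G.Adj p j ∧ P j).card * Real.sin α +
       (Finset.univ.filter fun j : Fin n => G.Adj p j ∧ ¬ P j).card *
        Real.sin (θ a t - θ b t + α)) = ∑ j : Fin n,
        ((if G.Adj p j then Real.sin (θ j t - θ p t - α) else 0) +
        ((if G.Adj p j ∧ P j then Real.sin α else 0) +
         (if G.Adj p j ∧ ¬ P j then Real.sin (θ a t - θ b t + α) else 0))) := by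
      intro t
      rw [Finset.sum_add_distrib, Finset.sum_add_distrib, ← Finset.sum_filter (fun j => G.Adj p j ∧ P j),
        ← Finset.sum_filter (fun j => G.Adj p j ∧ ¬ P j)]
      simp [kuramotoDeriv]
    simp_rw [e]
    have e0 : 𝓝 (0 : ℝ) = 𝓝 (∑ _j : Fin n, (0 : ℝ)) := by simp
    rw [e0]
    refine tendsto_finsetSum _ fun j _ => ?_
    by_cases hadj : G.Adj p j
    · by_cases hj : P j
      · simp only [hadj, hj, true_and, if_true, not_true, if_false, add_zero]
        have := ((Real.continuous_sin.tendsto _).comp ((h1 j p hj hp).sub_const α)).add_const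
          (Real.sin α)
        simpa using this
      · simp only [hadj, hj, true_and, if_true, not_false_eq_true, if_false, zero_add]
        have hz : Tendsto (fun t => |(θ a t - θ p t) - (θ b t - θ j t)|) atTop (𝓝 0) := by
          simpa using ((h1 a p ha hp).sub (h2 b j hb hj)).abs
        refine squeeze_zero_norm (fun t => ?_) hz
        have e1 : Real.sin (θ j t - θ p t - α) = - Real.sin (θ p t - θ j t + α) := by
          rw [← Real.sin_neg]; congr 1; ring
        rw [e1, Real.norm_eq_abs, neg_add_eq_sub]
        refine (kb_sin_lip _ _).trans (le_of_eq ?_)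
        congr 1; ring
    · simp [hadj]
  have hD : Tendsto (fun t => kuramotoDeriv G α θ u t - kuramotoDeriv G α θ v t)
      atTop (𝓝 0) := by
    refine kb_barbalat (fun t => θ u t - θ v t) _ (2 * (n * (2 * n)))
      (fun t ht => (hθ u t ht).sub (hθ v t ht)) (fun s hs t ht => ?_) (h1 u v hu hv)
    have e : kuramotoDeriv G α θ u s - kuramotoDeriv G α θ v s -
      (kuramotoDeriv G α θ u t - kuramotoDeriv G α θ v t) =
      (kuramotoDeriv G α θ u s - kuramotoDeriv G α θ u t) -
      (kuramotoDeriv G α θ v s - kuramotoDeriv G α θ v t) := by ring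
    rw [e]
    have := abs_sub (kuramotoDeriv G α θ u s - kuramotoDeriv G α θ u t)
      (kuramotoDeriv G α θ v s - kuramotoDeriv G α θ v t)
    linarith [kb_deriv_lip G α θ hθ u s hs t ht, kb_deriv_lip G α θ hθ v s hs t ht]
  have hF := ((asym u hu).sub (asym v hv)).sub hD
  generalize (Finset.univ.filter fun j : Fin n => G.Adj u j ∧ P j).card = u1 at *
  generalize (Finset.univ.filter fun j : Fin n => G.Adj v j ∧ P j).card = v1 at *
  generalize (Finset.univ.filter fun j : Fin n => G.Adj u j ∧ ¬ P j).card = u2 at *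
  generalize (Finset.univ.filter fun j : Fin n => G.Adj v j ∧ ¬ P j).card = v2 at *
  have hF' : Tendsto (fun t => ((u1 : ℝ) - v1) * Real.sin α +
      ((u2 : ℝ) - v2) * Real.sin (θ a t - θ b t + α)) atTop (𝓝 0) := by
    have e0 : (0 : ℝ) = 0 - 0 - 0 := by norm_num
    rw [e0]
    refine hF.congr fun t => ?_
    ring
  have hsα : 0 < Real.sin α :=
    Real.sin_pos_of_pos_of_lt_pi hα.1 (by linarith [hα.2, Real.pi_pos])
  have h22 : u2 = v2 := by
    by_contra hne
    have hne' : (u2 : ℝ) - v2 ≠ 0 := sub_ne_zero.2 (by exact_mod_cast hne)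
    have hlim : Tendsto (fun t => Real.sin (θ a t - θ b t + α)) atTop
        (𝓝 ((0 - ((u1 : ℝ) - v1) * Real.sin α) / ((u2 : ℝ) - v2))) := by
      refine ((hF'.sub_const (((u1 : ℝ) - v1) * Real.sin α)).div_const
        ((u2 : ℝ) - v2)).congr fun t => ?_
      rw [add_sub_cancel_left, mul_div_cancel_left₀ _ hne']
    have hcont : ∀ i, ContinuousOn (θ i) (Set.Ici 0) :=
      fun i t ht => (hθ i t ht).continuousWithinAt
    obtain ⟨l, hl⟩ := kb_sin_conv (fun t => θ a t - θ b t + α)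
      (((hcont a).sub (hcont b)).add continuousOn_const) _ hlim
    refine hdiv ⟨l - α, ?_⟩
    refine (hl.sub_const α).congr fun t => ?_
    ring
  refine ⟨?_, h22⟩
  subst h22
  simp only [sub_self, zero_mul, add_zero] at hF'
  have := tendsto_nhds_unique hF' tendsto_const_nhds
  have := (mul_eq_zero.1 this.symm).resolve_right hsα.ne'
  exact_mod_cast sub_eq_zero.1 this

lemma kb_avg {n : ℕ} (θ : Fin n → ℝ → ℝ) (S : Finset (Fin n)) (m : ℕ) (hm : S.card = m)
    (a : Fin n) (ha : a ∈ S)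
    (h : ∀ i ∈ S, Tendsto (fun t => θ i t - θ a t) atTop (𝓝 0)) :
    Tendsto (fun t => (∑ i ∈ S, θ i t) / (m : ℝ) - θ a t) atTop (𝓝 0) := by
  have hm0 : (m : ℝ) ≠ 0 := by
    rw [← hm]; exact_mod_cast (Finset.card_pos.2 ⟨a, ha⟩).ne'
  have := (tendsto_finsetSum S h).div_const (m : ℝ)
  simp only [Finset.sum_const_zero, zero_div] at this
  refine this.congr fun t => ?_
  rw [Finset.sum_sub_distrib, Finset.sum_const, hm, nsmul_eq_mul]
  field_simp


/-- **Theorem (first branch of the bipartition theorem).** Under the hypotheses of the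
bipartition theorem, if `λ₁(t) - λ₂(t)` does not converge to any constant as `t → ∞`,
then the bipartition `S₁ ∪ S₂` is equitable. -/
theorem kuramoto_bipartition_nonconvergent {n : ℕ} (G : SimpleGraph (Fin n))
    (hconn : G.Connected) (k : ℕ) (hk1 : 1 ≤ k) (hk2 : k ≤ n - 1)
    (α : ℝ) (hα : α ∈ Set.Ioo 0 (Real.pi / 2))
    (θ : Fin n → ℝ → ℝ) (hθ : IsKuramotoSol G α θ)
    (h1 : ∀ i j : Fin n, (i : ℕ) < k → (j : ℕ) < k →
      Filter.Tendsto (fun t => θ i t - θ j t) Filter.atTop (nhds 0))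
    (h2 : ∀ p q : Fin n, k ≤ (p : ℕ) → k ≤ (q : ℕ) →
      Filter.Tendsto (fun t => θ p t - θ q t) Filter.atTop (nhds 0))
    (h3 : ∃ i p : Fin n, (i : ℕ) < k ∧ k ≤ (p : ℕ) ∧
      ¬ Filter.Tendsto (fun t => θ i t - θ p t) Filter.atTop (nhds 0))
    (hdiv : ¬ ∃ c : ℝ,
      Filter.Tendsto (fun t => avg1 k θ t - avg2 k θ t) Filter.atTop (nhds c)) :
    ∀ u v : Fin n, (((u : ℕ) < k ∧ (v : ℕ) < k) ∨ (k ≤ (u : ℕ) ∧ k ≤ (v : ℕ))) →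
      deg1 G k u = deg1 G k v ∧ deg2 G k u = deg2 G k v := by
  obtain ⟨a, b, ha, hb, -⟩ := h3
  have hc1 : (Finset.univ.filter fun i : Fin n => (i : ℕ) < k).card = k := by
    rw [Fin.card_filter_val_lt]; omega
  have hc2 : (Finset.univ.filter fun i : Fin n => k ≤ (i : ℕ)).card = n - k := by
    have := Finset.card_filter_add_card_filter_not (s := (Finset.univ : Finset (Fin n)))
      (fun i : Fin n => (i : ℕ) < k)
    simp only [not_lt, Finset.card_univ, Fintype.card_fin] at this
    omega
  have t1 : Tendsto (fun t => avg1 k θ t - θ a t) atTop (𝓝 0) :=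
    kb_avg θ _ k hc1 a (by simpa using ha) (fun i hi => h1 i a (by simpa using hi) ha)
  have t2 : Tendsto (fun t => avg2 k θ t - θ b t) atTop (𝓝 0) :=
    kb_avg θ _ (n - k) hc2 b (by simpa using hb) (fun i hi => h2 i b (by simpa using hi) hb)
  have hd : ¬ ∃ c : ℝ, Tendsto (fun t => θ a t - θ b t) atTop (𝓝 c) := by
    rintro ⟨c, hc⟩
    refine hdiv ⟨c + (0 - 0), ?_⟩
    refine (hc.add (t1.sub t2)).congr fun t => ?_
    ring
  have hd' : ¬ ∃ c : ℝ, Tendsto (fun t => θ b t - θ a t) atTop (𝓝 c) := by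
    rintro ⟨c, hc⟩
    refine hd ⟨-c, ?_⟩
    refine hc.neg.congr fun t => ?_
    ring
  rintro u v (⟨hu, hv⟩ | ⟨hu, hv⟩)
  · have := kb_core G α hα θ hθ (fun i => (i : ℕ) < k) h1
      (fun i j hi hj => h2 i j (not_lt.1 hi) (not_lt.1 hj)) a b ha (not_lt.2 hb) hd u v hu hv
    simp only [not_lt] at this
    unfold deg1 deg2
    convert this
  · have := kb_core G α hα θ hθ (fun i => k ≤ (i : ℕ)) h2
      (fun i j hi hj => h1 i j (not_le.1 hi) (not_le.1 hj)) b a hb (not_le.2 ha) hd' u v hu hv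
    simp only [not_le] at this
    unfold deg1 deg2
    refine And.symm ?_
    convert this
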